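/- arXiv:1804.01898 — 5 statements merged into one kernel-verified Lean document; each statement's English description precedes it below -/
import Mathlib

section
/- Let P(s) = 48s^8 - 56s^7 + 92s^6 - 90s^5 + 86s^4 + 324s^3 + 317s^2 + 182s + 48 and Q(s) = 24s^8 - 28s^7 + 22s^6 - 5s^5 + 43s^4 + 112s^3 + 100s^2 + 50s + 12. For every integer s ≥ 3 one has Q(s) > 0 and 3·P(s)/Q(s) < 6 + 12/(2s^2 + s + 2). -/
/-!
Writing `s = t + 3` with `t ≥ 0`, both `Q(s)` and the cross-multiplied difference
`(6 (2s² + s + 2) + 12) Q(s) - 3 P(s) (2s² + s + 2)` become polynomials in `t` all of whose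
coefficients are nonnegative, with positive constant term, hence are positive. (The difference
vanishes at `s = 2`, so the bound `s ≥ 3` is sharp.)
-/

/-- The numerator polynomial `P` from Theorem 0.3 of the paper. -/
def Ppoly (x : ℚ) : ℚ :=
  48*x^8 - 56*x^7 + 92*x^6 - 90*x^5 + 86*x^4 + 324*x^3 + 317*x^2 + 182*x + 48

/-- The denominator polynomial `Q` from Theorem 0.3 of the paper. -/
def Qpoly (x : ℚ) : ℚ :=
  24*x^8 - 28*x^7 + 22*x^6 - 5*x^5 + 43*x^4 + 112*x^3 + 100*x^2 + 50*x + 12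

/-- For every integer `s ≥ 3`, one has `Q(s) > 0` and
`3·P(s)/Q(s) < 6 + 12/(2s² + s + 2)`. -/
theorem slope_lt_brill_noether (s : ℤ) (hs : 3 ≤ s) :
    0 < Qpoly (s : ℚ) ∧
      3 * Ppoly (s : ℚ) / Qpoly (s : ℚ) < 6 + 12 / (2*(s:ℚ)^2 + (s:ℚ) + 2) := by
  obtain ⟨t, ht, hst⟩ : ∃ t : ℚ, 0 ≤ t ∧ (s : ℚ) = t + 3 :=
    ⟨s - 3, sub_nonneg.2 (by exact_mod_cast hs), by ring⟩
  rw [hst]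
  have hQ : 0 < Qpoly (t + 3) := by
    unfold Qpoly
    ring_nf
    positivity
  have hD : 0 < 2 * (t + 3) ^ 2 + (t + 3) + 2 := by positivity
  refine ⟨hQ, ?_⟩
  have key : 0 < (6 * (2 * (t + 3) ^ 2 + (t + 3) + 2) + 12) * Qpoly (t + 3)
      - 3 * Ppoly (t + 3) * (2 * (t + 3) ^ 2 + (t + 3) + 2) := by
    unfold Qpoly Ppoly
    ring_nf
    positivity
  rw [div_lt_iff₀ hQ, ← mul_lt_mul_iff_left₀ hD]
  -- clear the remaining denominator `2s² + s + 2`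
  have e : (6 + 12 / (2 * (t + 3) ^ 2 + (t + 3) + 2)) * Qpoly (t + 3)
        * (2 * (t + 3) ^ 2 + (t + 3) + 2)
      = (6 * (2 * (t + 3) ^ 2 + (t + 3) + 2) + 12) * Qpoly (t + 3) := by
    field_simp
  rw [e]
  exact sub_pos.1 key
end

section
/- Fix an integer s ≥ 1. Define r : ℤ → ℚ by r(n) = 1/n! for n ≥ 0 and r(n) = 0 for n < 0. Then the determinant of the (2s+1)×(2s+1) matrix with (j,ℓ)-entry r(s + ℓ − j), for 1 ≤ j, ℓ ≤ 2s+1, equals ∏_{k=0}^{2s} k!/(s+k)!. -/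
/-!
The entry `r(s + ℓ - j)` equals `(s+ℓ)(s+ℓ-1)⋯(s+ℓ-j+1) / (s+ℓ)!`, the falling factorial vanishing
exactly when `j > s + ℓ`. Pulling `1/(s+ℓ)!` out of column `ℓ` leaves the values at the points
`s + ℓ` of monic polynomials of degree `j` (`descPochhammer ℚ j`), so the remaining determinant is
the Vandermonde determinant of these points. By translation invariance it is that of
`0, 1, …, 2s`, which is `∏ k!`.
-/

/-- `r(n) = 1/n!` for `n ≥ 0` and `r(n) = 0` for `n < 0`. -/
def rfact (n : ℤ) : ℚ := if 0 ≤ n then 1 / (Nat.factorial n.toNat : ℚ) else 0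

/-- Clearing the column denominator turns an entry of the matrix into a falling factorial. -/
lemma rfact_add_sub (s l j : ℕ) :
    rfact ((s : ℤ) + l - j) =
      1 / ((s + l).factorial : ℚ) * (descPochhammer ℚ j).eval ((l : ℚ) + s) := by
  have hcast : (l : ℚ) + s = ((s + l : ℕ) : ℚ) := by push_cast; ring
  rw [hcast, descPochhammer_eval_eq_descFactorial, rfact]
  split_ifs with h
  · have hj : j ≤ s + l := by omega
    have htoNat : ((s : ℤ) + l - j).toNat = s + l - j := by omega
    have hfac := Nat.factorial_mul_descFactorial hj
    have h₁ : ((s + l - j).factorial : ℚ) ≠ 0 := by positivity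
    have h₂ : ((s + l).factorial : ℚ) ≠ 0 := by positivity
    rw [htoNat]
    field_simp
    exact_mod_cast hfac.symm
  · rw [Nat.descFactorial_of_lt (by omega)]
    simp

/-- The determinant of the `(2s+1)×(2s+1)` matrix with `(j,ℓ)`-entry `r(s + ℓ − j)`
(for `1 ≤ j, ℓ ≤ 2s+1`) equals `∏_{k=0}^{2s} k!/(s+k)!`. -/
theorem harris_tu_determinant (s : ℕ) (hs : 1 ≤ s) :
    Matrix.det (Matrix.of fun j ℓ : Fin (2*s + 1) =>
        rfact ((s : ℤ) + (ℓ : ℕ) - (j : ℕ))) =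
      ∏ k ∈ Finset.range (2*s + 1),
        (Nat.factorial k : ℚ) / (Nat.factorial (s + k) : ℚ) := by
  have hV := Matrix.det_eval_matrixOfPolynomials_eq_det_vandermonde
    (fun i : Fin (2*s + 1) => ((i : ℕ) : ℚ) + s) (fun j => descPochhammer ℚ j)
    (fun j => descPochhammer_natDegree ℚ j) (fun j => monic_descPochhammer ℚ j)
  rw [Matrix.det_vandermonde_add, Matrix.det_vandermonde_id_eq_superFactorial] at hV
  simp only [rfact_add_sub]
  refine (Matrix.det_mul_row (fun l : Fin (2*s + 1) => 1 / ((s + (l : ℕ)).factorial : ℚ))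
    (Matrix.of fun l j : Fin (2*s + 1) =>
      (descPochhammer ℚ j).eval (((l : ℕ) : ℚ) + s)).transpose).trans ?_
  rw [Matrix.det_transpose]
  rw [← hV, Fin.prod_univ_eq_prod_range (fun l => 1 / ((s + l).factorial : ℚ)),
    ← Nat.prod_range_succ_factorial]
  push_cast
  rw [← Finset.prod_mul_distrib]
  exact Finset.prod_congr rfl fun k _ => one_div_mul_eq_div _ _
end

section
/- Fix an integer s ≥ 2. Define r : ℤ → ℚ by r(n) = 1/n! for n ≥ 0 and r(n) = 0 for n < 0. Let (i₁,…,i_{2s+1}) be given by i_j = 1 for 1 ≤ j ≤ 2s and i_{2s+1} = 0. Then the determinant of the (2s+1)×(2s+1) matrix with (j,ℓ)-entry r(s − 1 + i_j − j + ℓ) equals s(2s+1)·∏_{k=0}^{2s} k!/(s+k)!. -/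
/-- The falling factorial expression of `1 / (L - k)!`; both sides vanish when `L < k`. -/
lemma rfact_sub (L k : ℕ) :
    rfact ((L : ℤ) - k) =
      1 / (Nat.factorial L : ℚ) * (descPochhammer ℚ k).eval (L : ℚ) := by
  rw [descPochhammer_eval_eq_descFactorial]
  unfold rfact
  split_ifs with h
  · have hk : k ≤ L := by omega
    have h1 : ((L : ℤ) - k).toNat = L - k := by omega
    rw [h1, ← Nat.factorial_mul_descFactorial hk]
    have h2 : (Nat.factorial (L - k) : ℚ) ≠ 0 := by exact_mod_cast Nat.factorial_ne_zero _
    have h3 : (Nat.descFactorial L k : ℚ) ≠ 0 := by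
      exact_mod_cast (Nat.descFactorial_pos.2 hk).ne'
    push_cast
    field_simp
  · rw [Nat.descFactorial_of_lt (by omega)]
    simp

/-- The nodes `t, t + 2, t + 3, …, t + n + 1`: consecutive integers with a gap after the first one.
Here `t = s - 1`. -/
def node (t n : ℕ) : Fin (n + 1) → ℕ := Fin.cons t fun i : Fin n => t + 2 + i

lemma det_vandermonde_node (t m : ℕ) :
    (Matrix.vandermonde fun i => (node t (m + 1) i : ℚ)).det =
      ((m : ℚ) + 2) * ∏ k ∈ Finset.range (m + 2), (Nat.factorial k : ℚ) := by
  have hc : ∏ i : Fin (m + 1), ∏ j ∈ Finset.Ioi i, (((t + 2 + j : ℕ) : ℚ) - ((t + 2 + i : ℕ) : ℚ))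
      = ∏ k ∈ Finset.range (m + 1), (Nat.factorial k : ℚ) := by
    have h := Matrix.det_vandermonde_id_eq_superFactorial (R := ℚ) m
    rw [Matrix.det_vandermonde] at h
    have h2 : (Nat.superFactorial m : ℚ) =
        ∏ k ∈ Finset.range (m + 1), (Nat.factorial k : ℚ) := by
      rw [← Nat.prod_range_factorial_succ, Finset.prod_range_succ']
      push_cast
      simp
    rw [← h2, ← h]
    refine Finset.prod_congr rfl fun i _ => Finset.prod_congr rfl fun j _ => ?_
    push_cast
    ring
  have h0 : ∏ j : Fin (m + 1), (((t + 2 + j : ℕ) : ℚ) - (t : ℚ)) =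
      (Nat.factorial (m + 2) : ℚ) := by
    rw [Fin.prod_univ_eq_prod_range (fun j => ((t + 2 + j : ℕ) : ℚ) - (t : ℚ)),
      ← Finset.prod_range_add_one_eq_factorial, Finset.prod_range_succ' _ (m + 1)]
    push_cast
    rw [mul_one]
    refine Finset.prod_congr rfl fun j _ => ?_
    ring
  rw [Matrix.det_vandermonde, Fin.prod_univ_succ, Fin.prod_Ioi_zero]
  simp only [Fin.prod_Ioi_succ, node, Fin.cons_zero, Fin.cons_succ]
  rw [h0, hc, Finset.prod_range_succ _ (m + 1), Nat.factorial_succ (m + 1)]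
  push_cast
  ring

/-- For `i_j = 1` for `1 ≤ j ≤ 2s` and `i_{2s+1} = 0`, the determinant of the
`(2s+1)×(2s+1)` matrix with `(j,ℓ)`-entry `r(s − 1 + i_j − j + ℓ)` equals
`s(2s+1)·∏_{k=0}^{2s} k!/(s+k)!`. -/
theorem harris_tu_determinant_theta (s : ℕ) (hs : 2 ≤ s) :
    Matrix.det (Matrix.of fun j ℓ : Fin (2*s + 1) =>
        rfact ((s : ℤ) - 1 + (if (j : ℕ) < 2*s then 1 else 0) + (ℓ : ℕ) - (j : ℕ))) =
      (s : ℚ) * (2*(s : ℚ) + 1) *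
        ∏ k ∈ Finset.range (2*s + 1),
          (Nat.factorial k : ℚ) / (Nat.factorial (s + k) : ℚ) := by
  rw [← Matrix.det_submatrix_equiv_self Fin.revPerm]
  have hM : (Matrix.of fun j ℓ : Fin (2*s + 1) =>
        rfact ((s : ℤ) - 1 + (if (j : ℕ) < 2*s then 1 else 0) + (ℓ : ℕ) - (j : ℕ))).submatrix
          Fin.revPerm Fin.revPerm =
      Matrix.of fun i m : Fin (2*s + 1) =>
        1 / (Nat.factorial (node (s - 1) (2*s) i) : ℚ) *
          (Matrix.of fun i m : Fin (2*s + 1) =>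
            (descPochhammer ℚ m).eval (node (s - 1) (2*s) i : ℚ)) i m := by
    ext i m
    simp only [Matrix.submatrix_apply, Matrix.of_apply, Fin.revPerm_apply, Fin.val_rev]
    rw [← rfact_sub]
    congr 1
    have hm := m.isLt
    refine Fin.cases ?_ (fun i => ?_) i
    · simp only [node, Fin.cons_zero, Fin.val_zero]
      split_ifs <;> omega
    · have hi := i.isLt
      simp only [node, Fin.cons_succ, Fin.val_succ]
      split_ifs <;> omega
  rw [hM, Matrix.det_mul_column,
    ← Matrix.det_eval_matrixOfPolynomials_eq_det_vandermonde (fun i => (node (s - 1) (2*s) i : ℚ))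
      (fun m => descPochhammer ℚ m) (fun m => descPochhammer_natDegree ℚ m)
      (fun m => monic_descPochhammer ℚ m)]
  obtain ⟨t, rfl⟩ : ∃ t, s = t + 1 := ⟨s - 1, by omega⟩
  have hV := det_vandermonde_node t (2 * t + 1)
  have hP : ∏ i, 1 / (Nat.factorial (node t (2 * (t + 1)) i) : ℚ) =
      ((t : ℚ) + 1) * ∏ k ∈ Finset.range (2 * (t + 1) + 1),
        1 / (Nat.factorial (t + 1 + k) : ℚ) := by
    rw [Fin.prod_univ_succ, Finset.prod_range_succ']
    simp only [node, Fin.cons_zero, Fin.cons_succ]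
    rw [Fin.prod_univ_eq_prod_range (fun j => 1 / (Nat.factorial (t + 2 + j) : ℚ)),
      add_zero, Nat.factorial_succ t]
    have h1 : ∀ k, t + 1 + (k + 1) = t + 2 + k := fun k => by ring
    simp only [h1]
    have h2 : (Nat.factorial t : ℚ) ≠ 0 := by exact_mod_cast Nat.factorial_ne_zero _
    push_cast
    field_simp
  rw [Nat.add_sub_cancel, hP]
  -- `erw`: the index types agree since `2 * (t + 1)` reduces to `2 * t + 1 + 1`
  erw [hV]
  simp only [div_eq_mul_inv, Finset.prod_mul_distrib, one_mul]
  rw [show 2 * (t + 1) + 1 = 2 * t + 1 + 2 by ring]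
  push_cast
  ring
end

section
/- Fix an integer s ≥ 2. Define r : ℤ → ℚ by r(n) = 1/n! for n ≥ 0 and r(n) = 0 for n < 0. Let (i₁,…,i_{2s+1}) be given by i_j = 1 for 1 ≤ j ≤ 2s−2 and i_{2s−1} = i_{2s} = i_{2s+1} = 0. Then the determinant of the (2s+1)×(2s+1) matrix with (j,ℓ)-entry r(s − 1 + i_j − j + ℓ) equals (s²(s+1)(s+2)(2s−1)(2s+1)/3)·∏_{k=0}^{2s} k!/(s+k)!. -/
/-- The nodes `t, t+1, t+2, t+4, t+5, …`: consecutive integers from `t` with `t+3` omitted.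
With `t = s - 1` these index the rows of the matrix in reverse order. -/
def htNode (t j : ℕ) : ℕ := if j < 3 then t + j else t + 1 + j

/-- Both sides vanish when `c < l`. -/
lemma rfact_sub_eq (c l : ℕ) :
    rfact ((c : ℤ) - l) = (1 / (c.factorial : ℚ)) * (descPochhammer ℚ l).eval (c : ℚ) := by
  rw [descPochhammer_eval_eq_descFactorial]
  unfold rfact
  by_cases h : l ≤ c
  · rw [if_pos (by omega), show ((c : ℤ) - l).toNat = c - l by omega]
    have h1 := Nat.factorial_mul_descFactorial h
    have h2 : (((c - l).factorial : ℕ) : ℚ) ≠ 0 := by positivity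
    have h3 : ((c.factorial : ℕ) : ℚ) ≠ 0 := by positivity
    field_simp
    rw [← h1]
    push_cast
    ring
  · rw [if_neg (by omega), Nat.descFactorial_of_lt (by omega)]
    simp

/-- The determinant of `(1 / (c_j - ℓ)!)` as a Vandermonde product over `∏ c_j!`, with the
factors grouped by the larger index. -/
lemma det_rfact_eq_prod (N : ℕ) (c : ℕ → ℕ) :
    Matrix.det (Matrix.of fun j l : Fin N => rfact ((c j : ℤ) - (l : ℕ))) =
      ∏ j ∈ Finset.range N,
        (1 / ((c j).factorial : ℚ)) * ∏ i ∈ Finset.range j, ((c j : ℚ) - c i) := by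
  simp_rw [rfact_sub_eq]
  have h := Matrix.det_mul_column (fun j : Fin N => 1 / ((c j).factorial : ℚ))
    (Matrix.of fun j l : Fin N => (descPochhammer ℚ l).eval (c j : ℚ))
  simp only [Matrix.of_apply] at h
  rw [h, ← Matrix.det_eval_matrixOfPolynomials_eq_det_vandermonde (fun j : Fin N => (c j : ℚ))
    (fun l => descPochhammer ℚ l) (fun l => descPochhammer_natDegree ℚ l)
    (fun l => monic_descPochhammer ℚ l), Matrix.det_vandermonde, Finset.prod_mul_distrib,
    ← Fin.prod_univ_eq_prod_range (fun j => 1 / ((c j).factorial : ℚ)),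
    ← Fin.prod_univ_eq_prod_range (fun j => ∏ i ∈ Finset.range j, ((c j : ℚ) - c i))]
  congr 1
  rw [Finset.prod_comm' (t' := Finset.univ) (s' := fun j => Finset.Iio j) (by simp)]
  refine Finset.prod_congr rfl fun j _ => ?_
  rw [← Nat.Iio_eq_range, ← Fin.map_valEmbedding_Iio, Finset.prod_map]
  rfl

lemma prod_range_sub_eq_factorial (m : ℕ) :
    ∏ i ∈ Finset.range m, ((m : ℚ) - i) = m.factorial := by
  rw [← descPochhammer_eval_eq_prod_range, descPochhammer_eval_eq_descFactorial,
    Nat.descFactorial_self]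

lemma prod_htNode_sub (t m : ℕ) :
    ∏ i ∈ Finset.range (m + 3), ((htNode t (m + 3) : ℚ) - htNode t i) =
      ((m : ℚ) + 4) * (m + 3) * (m + 2) * m.factorial := by
  rw [add_comm m 3, Finset.prod_range_add, ← prod_range_sub_eq_factorial]
  congr 1
  · simp [Finset.prod_range_succ, htNode]
    ring
  · refine Finset.prod_congr rfl fun i _ => ?_
    simp [htNode]

lemma prod_htNode (t n : ℕ) :
    ∏ j ∈ Finset.range (n + 3), (1 / ((htNode t j).factorial : ℚ)) *
        ∏ i ∈ Finset.range j, ((htNode t j : ℚ) - htNode t i) =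
      ((n : ℚ) + 3) * (n + 2) * (n + 1) * (t + 1) * (t + 2) * (t + 3) / 6 *
        ∏ k ∈ Finset.range (n + 3), (k.factorial : ℚ) / ((t + 1 + k).factorial : ℚ) := by
  induction n with
  | zero =>
    simp [Finset.prod_range_succ, htNode, Nat.factorial_succ, add_right_comm t 1]
    have h : ((t.factorial : ℕ) : ℚ) ≠ 0 := by positivity
    have h1 : (t : ℚ) + 1 ≠ 0 := by positivity
    have h2 : (t : ℚ) + 2 ≠ 0 := by positivity
    have h3 : (t : ℚ) + 3 ≠ 0 := by positivity
    field_simp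
    ring
  | succ n ih =>
    rw [show n + 1 + 3 = n + 3 + 1 by ring, Finset.prod_range_succ, ih, prod_htNode_sub,
      Finset.prod_range_succ _ (n + 3)]
    have hc : htNode t (n + 3) = t + 1 + (n + 3) := by simp [htNode]
    have hf : ((n + 3).factorial : ℚ) = ((n : ℚ) + 3) * (n + 2) * (n + 1) * n.factorial := by
      simp only [Nat.factorial_succ]
      push_cast
      ring
    rw [hc, hf]
    push_cast
    ring


/-- For `i_j = 1` for `1 ≤ j ≤ 2s−2` and `i_{2s−1} = i_{2s} = i_{2s+1} = 0`, the
determinant of the `(2s+1)×(2s+1)` matrix with `(j,ℓ)`-entry `r(s − 1 + i_j − j + ℓ)`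
equals `(s²(s+1)(s+2)(2s−1)(2s+1)/3)·∏_{k=0}^{2s} k!/(s+k)!`. -/
theorem harris_tu_determinant_theta_cubed (s : ℕ) (hs : 2 ≤ s) :
    Matrix.det (Matrix.of fun j ℓ : Fin (2*s + 1) =>
        rfact ((s : ℤ) - 1 + (if (j : ℕ) < 2*s - 2 then 1 else 0) + (ℓ : ℕ) - (j : ℕ))) =
      (s : ℚ)^2 * ((s : ℚ) + 1) * ((s : ℚ) + 2) * (2*(s : ℚ) - 1) * (2*(s : ℚ) + 1) / 3 *
        ∏ k ∈ Finset.range (2*s + 1),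
          (Nat.factorial k : ℚ) / (Nat.factorial (s + k) : ℚ) := by
  obtain ⟨t, rfl⟩ : ∃ t, s = t + 1 := ⟨s - 1, by omega⟩
  rw [← Matrix.det_submatrix_equiv_self Fin.revPerm]
  have h := det_rfact_eq_prod (2 * (t + 1) + 1) (htNode t)
  rw [show 2 * (t + 1) + 1 = 2 * t + 3 by ring, prod_htNode] at h
  have hM : (Matrix.of fun j ℓ : Fin (2 * (t + 1) + 1) =>
      rfact (((t + 1 : ℕ) : ℤ) - 1 + (if (j : ℕ) < 2 * (t + 1) - 2 then 1 else 0)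
        + (ℓ : ℕ) - (j : ℕ))).submatrix Fin.revPerm Fin.revPerm =
      Matrix.of fun j l : Fin (2 * (t + 1) + 1) => rfact ((htNode t j : ℤ) - (l : ℕ)) := by
    ext j l
    simp only [Matrix.submatrix_apply, Matrix.of_apply, Fin.revPerm_apply, Fin.val_rev, htNode]
    congr 1
    have := j.isLt
    have := l.isLt
    split_ifs <;> omega
  rw [hM]
  refine h.trans ?_
  rw [show 2 * (t + 1) + 1 = 2 * t + 3 by ring]
  push_cast
  ring
end

section
/- Fix an integer s ≥ 2. Define r : ℤ → ℚ by r(n) = 1/n! for n ≥ 0 and r(n) = 0 for n < 0. Let (i₁,…,i_{2s+1}) be given by i₁ = i₂ = 2, i_j = 1 for 3 ≤ j ≤ 2s−1, and i_{2s} = i_{2s+1} = 0. Then the determinant of the (2s+1)×(2s+1) matrix with (j,ℓ)-entry r(s − 1 + i_j − j + ℓ) equals ((s−1)(s+1)²(2s+1)²/(3(3s+1)))·∏_{k=0}^{2s} k!/(s+k)!. -/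
lemma rfact_sub_s11 (c m : ℕ) :
    rfact ((c : ℤ) - m) = (1 / (c.factorial : ℚ)) * (c.descFactorial m : ℚ) := by
  unfold rfact
  split_ifs with h
  · have hmc : m ≤ c := by omega
    have h1 : ((c : ℤ) - m).toNat = c - m := by omega
    have h2 : ((c - m).factorial : ℚ) * c.descFactorial m = c.factorial := by
      exact_mod_cast Nat.factorial_mul_descFactorial hmc
    rw [h1, ← h2]
    have h3 : ((c - m).factorial : ℚ) ≠ 0 := by positivity
    have h4 : (c.descFactorial m : ℚ) ≠ 0 := by
      have := Nat.descFactorial_eq_zero_iff_lt (n := c) (k := m)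
      exact_mod_cast fun h => absurd (this.1 h) (by omega)
    field_simp
  · have hmc : c < m := by omega
    simp [Nat.descFactorial_eq_zero_iff_lt.2 hmc]

/-- The determinant of inverse factorials with arbitrary row shifts, in Vandermonde form. -/
lemma det_inv_factorial (n : ℕ) (c : ℕ → ℕ) :
    Matrix.det (Matrix.of fun k m : Fin n => rfact ((c k : ℤ) - (m : ℕ))) =
      ∏ k ∈ Finset.range n, ((1 / ((c k).factorial : ℚ)) *
        ∏ i ∈ Finset.range k, ((c k : ℚ) - c i)) := by
  have h1 : (Matrix.of fun k m : Fin n => rfact ((c k : ℤ) - (m : ℕ))) =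
      Matrix.of fun k m : Fin n => (1 / ((c k).factorial : ℚ)) *
        (Matrix.of fun k m : Fin n =>
          (descPochhammer ℚ (m : ℕ)).eval (c k : ℚ)) k m := by
    ext k m
    simp only [Matrix.of_apply, rfact_sub_s11, descPochhammer_eval_eq_descFactorial]
  rw [h1, Matrix.det_mul_column,
    ← Matrix.det_eval_matrixOfPolynomials_eq_det_vandermonde (fun k : Fin n => (c k : ℚ))
      (fun m : Fin n => descPochhammer ℚ (m : ℕ))
      (fun m => descPochhammer_natDegree ℚ _) (fun m => monic_descPochhammer ℚ _),
    Matrix.det_vandermonde, Finset.prod_mul_distrib]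
  congr 1
  · exact Fin.prod_univ_eq_prod_range (fun k => 1 / ((c k).factorial : ℚ)) n
  · rw [← Fin.prod_univ_eq_prod_range (fun k => ∏ i ∈ Finset.range k, ((c k : ℚ) - c i)) n,
      Finset.prod_comm' (t' := Finset.univ) (s' := fun j => Finset.Iio j) (by simp)]
    refine Finset.prod_congr rfl fun j _ => ?_
    rw [← Nat.Iio_eq_range, ← Fin.map_valEmbedding_Iio, Finset.prod_map]
    rfl

lemma prod_sub_mul_factorial (a m : ℕ) :
    (∏ i ∈ Finset.range m, ((m : ℚ) + a - i)) * a.factorial = ((m + a).factorial : ℚ) := by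
  induction m with
  | zero => simp
  | succ m ih =>
    rw [Finset.prod_range_succ', show m + 1 + a = (m + a) + 1 by ring, Nat.factorial_succ]
    push_cast
    have hshift : ∏ i ∈ Finset.range m, ((m : ℚ) + 1 + a - (i + 1)) =
        ∏ i ∈ Finset.range m, ((m : ℚ) + a - i) :=
      Finset.prod_congr rfl fun i _ => by ring
    rw [← ih, hshift]
    ring

/-- The `k`-th smallest element of `{s - 1, …, 3s + 1} \ {s + 1, 3s - 1}` for `s = t + 2`. -/
def rowShift (t k : ℕ) : ℕ :=
  if k < 2 then t + 1 + k else if k < 2 * t + 3 then t + 2 + k else t + 3 + k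

/-- The contribution of row `k`: `1 / (rowShift t k)!` times the differences with earlier rows. -/
def rowFactor (t k : ℕ) : ℚ :=
  (1 / ((rowShift t k).factorial : ℚ)) *
    ∏ i ∈ Finset.range k, ((rowShift t k : ℚ) - rowShift t i)

lemma rowShift_mid (t i : ℕ) (h : i < 2 * t + 1) : rowShift t (i + 2) = t + 4 + i := by
  unfold rowShift
  rw [if_neg (by omega), if_pos (by omega)]
  ring

lemma rowFactor_mid (t m : ℕ) (hm : m < 2 * t + 1) :
    rowFactor t (m + 2) =
      (((m + 2).factorial : ℚ) / ((t + 2 + (m + 2)).factorial : ℚ)) * ((m + 3) / (m + 1)) := by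
  have h0 := prod_sub_mul_factorial 0 m
  have h1 : ∏ i ∈ Finset.range m, ((rowShift t (m + 2) : ℚ) - rowShift t (i + 2)) =
      ∏ i ∈ Finset.range m, ((m : ℚ) + (0 : ℕ) - i) := by
    refine Finset.prod_congr rfl fun i hi => ?_
    have := Finset.mem_range.1 hi
    rw [rowShift_mid t m hm, rowShift_mid t i (by omega)]
    push_cast
    ring
  have e0 : rowShift t 0 = t + 1 := by simp [rowShift]
  have e1 : rowShift t 1 = t + 2 := by simp [rowShift]
  unfold rowFactor
  rw [Finset.prod_range_succ', Finset.prod_range_succ', h1, rowShift_mid t m hm]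
  simp only [Nat.factorial_zero, Nat.cast_one, mul_one, add_zero] at h0
  simp only [add_zero, zero_add, e0, e1, Nat.cast_zero] at h0 ⊢
  rw [h0, show t + 2 + (m + 2) = t + 4 + m by ring, Nat.factorial_succ (m + 1),
    Nat.factorial_succ m]
  have : ((t + 4 + m).factorial : ℚ) ≠ 0 := by positivity
  have : (m : ℚ) + 1 ≠ 0 := by positivity
  push_cast
  field_simp
  ring

lemma rowFactor_penultimate (t : ℕ) :
    rowFactor t (2 * t + 3) =
      (((2 * t + 3).factorial : ℚ) / ((t + 2 + (2 * t + 3)).factorial : ℚ)) *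
        ((2 * t + 5) * (2 * t + 4) / ((2 * t + 3) * (3 * t + 6))) := by
  have h0 := prod_sub_mul_factorial 1 (2 * t + 1)
  have ek : rowShift t (2 * t + 1 + 1 + 1) = 3 * t + 6 := by
    unfold rowShift
    rw [if_neg (by omega), if_neg (by omega)]
    ring
  have h1 : ∏ i ∈ Finset.range (2 * t + 1),
        ((rowShift t (2 * t + 1 + 1 + 1) : ℚ) - rowShift t (i + 2)) =
      ∏ i ∈ Finset.range (2 * t + 1), (((2 * t + 1 : ℕ) : ℚ) + (1 : ℕ) - i) := by
    refine Finset.prod_congr rfl fun i hi => ?_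
    have := Finset.mem_range.1 hi
    rw [ek, rowShift_mid t i (by omega)]
    push_cast
    ring
  have e0 : rowShift t 0 = t + 1 := by simp [rowShift]
  have e1 : rowShift t 1 = t + 2 := by simp [rowShift]
  unfold rowFactor
  rw [Finset.prod_range_succ', Finset.prod_range_succ', h1, ek]
  simp only [Nat.factorial_one, Nat.cast_one, mul_one] at h0
  simp only [zero_add, e0, e1, Nat.cast_one] at h0 ⊢
  rw [h0, show t + 2 + (2 * t + 3) = 3 * t + 5 by ring, Nat.factorial_succ (3 * t + 5),
    Nat.factorial_succ (2 * t + 2)]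
  have : ((3 * t + 5).factorial : ℚ) ≠ 0 := by positivity
  have : 2 * (t : ℚ) + 3 ≠ 0 := by positivity
  have : (t : ℚ) + 2 ≠ 0 := by positivity
  push_cast
  field_simp
  ring

lemma rowFactor_last (t : ℕ) :
    rowFactor t (2 * t + 4) =
      (((2 * t + 4).factorial : ℚ) / ((t + 2 + (2 * t + 4)).factorial : ℚ)) *
        ((2 * t + 6) * (2 * t + 5) / (2 * (2 * t + 4) * (3 * t + 7))) := by
  have h0 := prod_sub_mul_factorial 2 (2 * t + 1)
  have ek : rowShift t (2 * t + 1 + 1 + 1 + 1) = 3 * t + 7 := by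
    unfold rowShift
    rw [if_neg (by omega), if_neg (by omega)]
    ring
  have ep : rowShift t (2 * t + 1 + 1 + 1) = 3 * t + 6 := by
    unfold rowShift
    rw [if_neg (by omega), if_neg (by omega)]
    ring
  have h1 : ∏ i ∈ Finset.range (2 * t + 1),
        ((rowShift t (2 * t + 1 + 1 + 1 + 1) : ℚ) - rowShift t (i + 2)) =
      ∏ i ∈ Finset.range (2 * t + 1), (((2 * t + 1 : ℕ) : ℚ) + (2 : ℕ) - i) := by
    refine Finset.prod_congr rfl fun i hi => ?_
    have := Finset.mem_range.1 hi
    rw [ek, rowShift_mid t i (by omega)]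
    push_cast
    ring
  have e0 : rowShift t 0 = t + 1 := by simp [rowShift]
  have e1 : rowShift t 1 = t + 2 := by simp [rowShift]
  unfold rowFactor
  rw [Finset.prod_range_succ, Finset.prod_range_succ', Finset.prod_range_succ', h1, ek, ep]
  rw [Nat.factorial_two, ← eq_div_iff (by norm_num)] at h0
  simp only [zero_add, e0, e1] at h0 ⊢
  rw [h0, show t + 2 + (2 * t + 4) = 3 * t + 6 by ring, Nat.factorial_succ (3 * t + 6),
    Nat.factorial_succ (2 * t + 3)]
  have : ((3 * t + 6).factorial : ℚ) ≠ 0 := by positivity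
  have : 3 * (t : ℚ) + 7 ≠ 0 := by positivity
  have : (t : ℚ) + 2 ≠ 0 := by positivity
  push_cast
  field_simp
  ring

/-- All rows but the last two; the corrections `(k + 1) / (k - 1)` telescope. -/
lemma prod_initial (t m : ℕ) (hm : m ≤ 2 * t + 1) :
    ∏ k ∈ Finset.range (m + 2), rowFactor t k =
      ((t + 2) * (t + 3) * ((m + 1) * (m + 2) / 2)) *
        ∏ k ∈ Finset.range (m + 2), ((k.factorial : ℚ) / ((t + 2 + k).factorial : ℚ)) := by
  induction m with
  | zero =>
    have : ((t + 1).factorial : ℚ) ≠ 0 := by positivity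
    have : (t : ℚ) + 2 ≠ 0 := by positivity
    have : (t : ℚ) + 3 ≠ 0 := by positivity
    simp only [rowFactor, rowShift, Finset.prod_range_succ, Finset.prod_range_zero,
      Nat.factorial_succ (t + 2), Nat.factorial_succ (t + 1), zero_add, add_zero]
    norm_num
    simp only [Nat.factorial_succ (t + 1)]
    push_cast
    field_simp
    ring
  | succ m ih =>
    rw [show m + 1 + 2 = (m + 2) + 1 by ring, Finset.prod_range_succ, ih (by omega),
      rowFactor_mid t m (by omega), Finset.prod_range_succ _ (m + 2)]
    have : (m : ℚ) + 1 ≠ 0 := by positivity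
    push_cast
    field_simp
    ring

/-- For `i₁ = i₂ = 2`, `i_j = 1` for `3 ≤ j ≤ 2s−1` and `i_{2s} = i_{2s+1} = 0`, the
determinant of the `(2s+1)×(2s+1)` matrix with `(j,ℓ)`-entry `r(s − 1 + i_j − j + ℓ)`
equals `((s−1)(s+1)²(2s+1)²/(3(3s+1)))·∏_{k=0}^{2s} k!/(s+k)!`. -/
theorem harris_tu_determinant_sq_sq (s : ℕ) (hs : 2 ≤ s) :
    Matrix.det (Matrix.of fun j ℓ : Fin (2*s + 1) =>
        rfact ((s : ℤ) - 1 +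
          (if (j : ℕ) < 2 then 2 else if (j : ℕ) < 2*s - 1 then 1 else 0) +
          (ℓ : ℕ) - (j : ℕ))) =
      ((s : ℚ) - 1) * ((s : ℚ) + 1)^2 * (2*(s : ℚ) + 1)^2 / (3 * (3*(s : ℚ) + 1)) *
        ∏ k ∈ Finset.range (2*s + 1),
          (Nat.factorial k : ℚ) / (Nat.factorial (s + k) : ℚ) := by
  obtain ⟨t, rfl⟩ : ∃ t, s = t + 2 := ⟨s - 2, by omega⟩
  rw [← Matrix.det_submatrix_equiv_self Fin.revPerm]
  have h1 : (Matrix.of fun j ℓ : Fin (2*(t + 2) + 1) =>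
        rfact (((t + 2 : ℕ) : ℤ) - 1 +
          (if (j : ℕ) < 2 then 2 else if (j : ℕ) < 2*(t + 2) - 1 then 1 else 0) +
          (ℓ : ℕ) - (j : ℕ))).submatrix Fin.revPerm Fin.revPerm =
      Matrix.of fun k m : Fin (2*(t + 2) + 1) => rfact ((rowShift t k : ℤ) - (m : ℕ)) := by
    ext k m
    have hk := k.isLt
    have hm := m.isLt
    simp only [Matrix.submatrix_apply, Matrix.of_apply, Fin.revPerm_apply, Fin.val_rev, rowShift]
    congr 1
    split_ifs <;> omega
  rw [h1, det_inv_factorial]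
  change ∏ k ∈ Finset.range (2 * t + 1 + 2 + 1 + 1), rowFactor t k = _
  rw [Finset.prod_range_succ, Finset.prod_range_succ, prod_initial t _ le_rfl,
    show 2 * (t + 2) + 1 = 2 * t + 1 + 2 + 1 + 1 by ring,
    Finset.prod_range_succ _ (2 * t + 1 + 2 + 1),
    Finset.prod_range_succ _ (2 * t + 1 + 2),
    show 2 * t + 1 + 2 + 1 = 2 * t + 4 by ring, show 2 * t + 1 + 2 = 2 * t + 3 by ring,
    rowFactor_penultimate, rowFactor_last]
  have : 2 * (t : ℚ) + 3 ≠ 0 := by positivity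
  have : (t : ℚ) + 2 ≠ 0 := by positivity
  have : 3 * (t : ℚ) + 7 ≠ 0 := by positivity
  have : 3 * ((t : ℚ) + 2) + 1 ≠ 0 := by positivity
  generalize ∏ k ∈ Finset.range (2 * t + 3), ((k.factorial : ℚ) / ((t + 2 + k).factorial : ℚ)) = A
  generalize ((2 * t + 3).factorial : ℚ) / ((t + 2 + (2 * t + 3)).factorial : ℚ) = B
  generalize ((2 * t + 4).factorial : ℚ) / ((t + 2 + (2 * t + 4)).factorial : ℚ) = C
  push_cast
  field_simp
  ring
end
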